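/- arXiv:2512.22079 — 2 statements merged into one kernel-verified Lean document; each statement's English description precedes it below -/
import Mathlib

section
/- (Perel'man–Wegner) Let Δ be a finite abstract simplicial complex of dimension d on a finite vertex set V. Then Δ is (2d+1)-representable: there exists a family (U_v)_{v ∈ V} of convex subsets of ℝ^{2d+1} such that for every nonempty subset σ ⊆ V, σ is a face of Δ if and only if ⋂_{v ∈ σ} U_v ≠ ∅. -/
open Polynomial in
lemma pw_point {V : Type*} [DecidableEq V] (t : V → ℝ) (ht : Function.Injective t) (d : ℕ)
    (σ : Finset V) (hσ : σ.card ≤ d + 1) :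
    ∃ (p : Fin (2 * d + 1) → ℝ) (c : ℝ), ∀ v,
      (v ∈ σ → (∑ i : Fin (2 * d + 1), p i * t v ^ ((i : ℕ) + 1)) - t v ^ (2 * d + 2) = c) ∧
      (v ∉ σ → (∑ i : Fin (2 * d + 1), p i * t v ^ ((i : ℕ) + 1)) - t v ^ (2 * d + 2) < c) := by
  obtain ⟨Q, hQ⟩ : ∃ Q : ℝ[X],
      Q = (∏ s ∈ σ, (X - C (t s))) ^ 2 * (X ^ 2 + C 1) ^ (d + 1 - σ.card) := ⟨_, rfl⟩
  have hm1 : (∏ s ∈ σ, (X - C (t s))).Monic := monic_prod_of_monic _ _ fun s _ => monic_X_sub_C _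
  have hm2 : (X ^ 2 + C 1 : ℝ[X]).Monic := monic_X_pow_add_C 1 (by norm_num)
  have hmon : Q.Monic := by rw [hQ]; exact (hm1.pow 2).mul (hm2.pow _)
  have hdeg : Q.natDegree = 2 * d + 2 := by
    rw [hQ, (hm1.pow 2).natDegree_mul (hm2.pow _), hm1.natDegree_pow, hm2.natDegree_pow,
      natDegree_X_pow_add_C, natDegree_prod_of_monic _ _ fun s _ => monic_X_sub_C _]
    simp only [natDegree_X_sub_C, Finset.sum_const, smul_eq_mul, mul_one]
    omega
  have hev : ∀ x : ℝ, (∑ i : Fin (2 * d + 1), (-Q.coeff ((i : ℕ) + 1)) * x ^ ((i : ℕ) + 1))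
      - x ^ (2 * d + 2) = Q.coeff 0 - Q.eval x := by
    intro x
    have hl : Q.coeff (2 * d + 1 + 1) = 1 := by
      have := hmon.coeff_natDegree
      rwa [hdeg] at this
    rw [eval_eq_sum_range, hdeg, Finset.sum_range_succ, Finset.sum_range_succ', hl,
      Fin.sum_univ_eq_sum_range (fun i => (-Q.coeff (i + 1)) * x ^ (i + 1)) (2 * d + 1)]
    simp only [neg_mul, Finset.sum_neg_distrib]
    ring
  refine ⟨fun i => -Q.coeff ((i : ℕ) + 1), Q.coeff 0, fun v => ⟨fun hv => ?_, fun hv => ?_⟩⟩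
  · rw [hev]
    have : Q.eval (t v) = 0 := by
      rw [hQ, eval_mul, eval_pow, eval_prod, Finset.prod_eq_zero hv (by simp)]
      simp
    rw [this, sub_zero]
  · rw [hev]
    have : 0 < Q.eval (t v) := by
      rw [hQ, eval_mul, eval_pow, eval_prod, eval_pow]
      have h1 : (∏ s ∈ σ, eval (t v) (X - C (t s))) ≠ 0 := by
        refine Finset.prod_ne_zero_iff.mpr fun s hs => ?_
        simp only [eval_sub, eval_X, eval_C]
        refine sub_ne_zero.mpr fun h => hv ?_
        rwa [ht h]
      have h2 : 0 < eval (t v) (X ^ 2 + C 1 : ℝ[X]) := by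
        simp only [eval_add, eval_pow, eval_X, eval_C]
        positivity
      positivity
    linarith

/-- **Perel'man–Wegner theorem.** Every finite abstract simplicial complex `Δ` of
dimension `d` on a finite vertex set `V` is `(2d+1)`-representable: there is a family
`(U_v)_{v ∈ V}` of convex subsets of `ℝ^{2d+1}` such that a nonempty `σ ⊆ V` is a face
of `Δ` if and only if `⋂_{v ∈ σ} U_v ≠ ∅`. -/
theorem perelman_wegner_representability
    {V : Type*} [Fintype V] [DecidableEq V] (Δ : Finset (Finset V)) (d : ℕ)
    (hclosed : ∀ σ ∈ Δ, ∀ τ ⊆ σ, τ ∈ Δ)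
    (hdim_le : ∀ σ ∈ Δ, σ.card ≤ d + 1)
    (hdim_eq : ∃ σ ∈ Δ, σ.card = d + 1) :
    ∃ U : V → Set (Fin (2 * d + 1) → ℝ),
      (∀ v, Convex ℝ (U v)) ∧
      ∀ σ : Finset V, σ.Nonempty →
        (σ ∈ Δ ↔ (⋂ v ∈ σ, U v).Nonempty) := by
  obtain ⟨t, ht⟩ : ∃ t : V → ℝ, Function.Injective t :=
    ⟨fun v => ((Fintype.equivFin V v : ℕ) : ℝ), fun a b h => by
      simpa [Fin.val_inj] using h⟩
  choose! p c hp using fun (σ : Finset V) (hσ : σ ∈ Δ) => pw_point t ht d σ (hdim_le σ hσ)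
  obtain ⟨A, hA⟩ : ∃ A : V → (Fin (2 * d + 1) → ℝ) →ₗ[ℝ] ℝ,
      ∀ v x, A v x = ∑ i : Fin (2 * d + 1), x i * t v ^ ((i : ℕ) + 1) :=
    ⟨fun v => ∑ i : Fin (2 * d + 1), (t v ^ ((i : ℕ) + 1)) • LinearMap.proj i, fun v x => by
      simp [mul_comm]⟩
  simp only [← hA] at hp
  have hle : ∀ σ ∈ Δ, ∀ v, A v (p σ) - t v ^ (2 * d + 2) ≤ c σ := fun σ hσ v => by
    by_cases h : v ∈ σ
    · exact ((hp σ hσ v).1 h).le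
    · exact ((hp σ hσ v).2 h).le
  refine ⟨fun v => convexHull ℝ {x | ∃ σ ∈ Δ, v ∈ σ ∧ p σ = x}, fun v => convex_convexHull _ _, ?_⟩
  intro τ hτ
  constructor
  · intro h
    refine ⟨p τ, Set.mem_iInter₂.mpr fun v hv => subset_convexHull _ _ ⟨τ, h, hv, rfl⟩⟩
  · rintro ⟨x, hx⟩
    rw [Set.mem_iInter₂] at hx
    by_contra hn
    obtain ⟨w, hw⟩ := hτ
    have h1 : ∀ v ∈ τ, (A w - A v) x ≤ t w ^ (2 * d + 2) - t v ^ (2 * d + 2) := by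
      intro v hv
      refine convexHull_min (t := {y | (A w - A v) y ≤ t w ^ (2 * d + 2) - t v ^ (2 * d + 2)})
        ?_ (convex_halfSpace_le (A w - A v).isLinear _) (hx v hv)
      rintro _ ⟨σ, hσ, hvσ, rfl⟩
      have a := (hp σ hσ v).1 hvσ
      have b := hle σ hσ w
      simp only [Set.mem_setOf_eq, LinearMap.sub_apply]
      linarith
    have h2 : ∑ v ∈ τ, (t w ^ (2 * d + 2) - t v ^ (2 * d + 2)) < (∑ v ∈ τ, (A w - A v)) x := by
      refine convexHull_min
        (t := {y | ∑ v ∈ τ, (t w ^ (2 * d + 2) - t v ^ (2 * d + 2)) < (∑ v ∈ τ, (A w - A v)) y})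
        ?_ (convex_halfSpace_gt (∑ v ∈ τ, (A w - A v)).isLinear _) (hx w hw)
      rintro _ ⟨σ, hσ, hwσ, rfl⟩
      have a := (hp σ hσ w).1 hwσ
      obtain ⟨u, hu, huσ⟩ : ∃ u ∈ τ, u ∉ σ := by
        by_contra! hc
        exact hn (hclosed σ hσ τ hc)
      simp only [Set.mem_setOf_eq, LinearMap.sum_apply, LinearMap.sub_apply]
      refine Finset.sum_lt_sum (fun v _ => ?_) ⟨u, hu, ?_⟩
      · have b := hle σ hσ v
        linarith
      · have b := (hp σ hσ u).2 huσ
        linarith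
    rw [LinearMap.sum_apply] at h2
    exact absurd (Finset.sum_le_sum h1) (not_le.mpr h2)
end

section
/- (Tancer's tightness) For every integer d ≥ 1 there exists a finite abstract simplicial complex Δ of dimension d, on some finite vertex set V, that is not 2d-representable: there is no family (U_v)_{v ∈ V} of convex subsets of ℝ^{2d} such that for every nonempty subset σ ⊆ V, σ is a face of Δ if and only if ⋂_{v ∈ σ} U_v ≠ ∅. -/
namespace Tz

open Classical in
noncomputable def ind (p : Prop) : ZMod 2 := if p then 1 else 0

theorem ind_pos {p : Prop} (h : p) : ind p = 1 := if_pos h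

theorem ind_neg {p : Prop} (h : ¬ p) : ind p = 0 := if_neg h

theorem ind_and {p q : Prop} : ind (p ∧ q) = ind p * ind q := by
  by_cases hp : p <;> by_cases hq : q <;> simp [ind, hp, hq]

theorem parity {V : Type*} (s : Finset V) (u r : V → ℝ) (hu : ∀ v ∈ s, u v ≠ 0)
    (hr : ∀ a ∈ s, ∀ b ∈ s, a ≠ b → r a ≠ r b) :
    (∑ i ∈ s, ind (∀ j ∈ s, j ≠ i → 0 < u j * (r j - r i)))
      = ind (∀ v ∈ s, 0 < u v) + ind (∀ v ∈ s, u v < 0) := by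
  classical
  induction s using Finset.induction_on_max_value r with
  | empty => simp [ind]; decide
  | insert a s ha hmax ih =>
    have ih := ih (fun v hv => hu v (Finset.mem_insert_of_mem hv))
      (fun x hx y hy => hr x (Finset.mem_insert_of_mem hx) y (Finset.mem_insert_of_mem hy))
    have hlt : ∀ x ∈ s, r x < r a := fun x hx =>
      lt_of_le_of_ne (hmax x hx) (hr x (Finset.mem_insert_of_mem hx) a
        (Finset.mem_insert_self _ _) (fun h => ha (h ▸ hx)))
    rw [Finset.sum_insert ha]
    have h1 : (∀ j ∈ insert a s, j ≠ a → 0 < u j * (r j - r a)) ↔ ∀ v ∈ s, u v < 0 := by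
      constructor
      · intro h v hv
        have := h v (Finset.mem_insert_of_mem hv) (fun h => ha (h ▸ hv))
        have := hlt v hv
        by_contra hc
        nlinarith
      · intro h j hj hja
        have hj' : j ∈ s := (Finset.mem_insert.1 hj).resolve_left hja
        exact mul_pos_of_neg_of_neg (h j hj') (by linarith [hlt j hj'])
    have h2 : ∀ i ∈ s, ind (∀ j ∈ insert a s, j ≠ i → 0 < u j * (r j - r i))
        = ind (0 < u a) * ind (∀ j ∈ s, j ≠ i → 0 < u j * (r j - r i)) := by
      intro i hi
      have hai : a ≠ i := fun h => ha (h ▸ hi)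
      have : 0 < r a - r i := by linarith [hlt i hi]
      rw [Finset.forall_mem_insert, ind_and]
      simp only [ne_eq, hai, not_false_eq_true, forall_const, mul_pos_iff_of_pos_right this]
    rw [Finset.sum_congr rfl h2, ← Finset.mul_sum, ih]
    rw [h1]
    simp only [Finset.forall_mem_insert, ind_and]
    rcases lt_or_gt_of_ne (hu a (Finset.mem_insert_self _ _)) with h | h
    · rw [ind_pos h, ind_neg (not_lt_of_gt h)]; ring
    · rw [ind_pos h, ind_neg (not_lt_of_gt h)]
      linear_combination CharTwo.add_self_eq_zero (ind (∀ v ∈ s, u v < 0))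

def GenS {V : Type*} (G : V → ℕ → ℝ) (m : ℕ) (s : Finset V) : Prop :=
  ∀ t ⊆ s, t.card ≤ m → ∀ μ : V → ℝ, (∀ j < t.card, ∑ v ∈ t, μ v * G v j = 0) → ∀ v ∈ t, μ v = 0

noncomputable def cc {V : Type*} (G : V → ℕ → ℝ) (k : ℕ) (s : Finset V) : ZMod 2 :=
  ind (s.card = k + 1 ∧ ∃ l : V → ℝ, (∀ v ∈ s, 0 < l v) ∧ (∀ j < k, ∑ v ∈ s, l v * G v j = 0) ∧
    0 < ∑ v ∈ s, l v * G v k)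

noncomputable def nn {V : Type*} (G : V → ℕ → ℝ) (k : ℕ) (s : Finset V) : ZMod 2 :=
  ind (s.card = k + 1 ∧ ∃ l : V → ℝ, (∀ v ∈ s, 0 < l v) ∧ (∀ j < k, ∑ v ∈ s, l v * G v j = 0))

theorem rel1 {V : Type*} (G : V → ℕ → ℝ) (m k : ℕ) (hk : k < m) (s : Finset V) (hs : GenS G m s) :
    nn G k s = cc G k s + cc (fun v j => - G v j) k s := by
  unfold nn cc
  by_cases hc : s.card = k + 1
  swap
  · simp [ind, hc]
  have hne : s.Nonempty := by rw [← Finset.card_pos]; omega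
  obtain ⟨v0, hv0⟩ := hne
  have key : ∀ l : V → ℝ, (∀ v ∈ s, 0 < l v) → (∀ j < k, ∑ v ∈ s, l v * G v j = 0) →
      ∑ v ∈ s, l v * G v k ≠ 0 := by
    intro l hl h0 h
    have := hs s subset_rfl (by omega) l (by
      intro j hj
      rcases Nat.lt_or_ge j k with h' | h'
      · exact h0 j h'
      · have : j = k := by omega
        rw [this, h]) v0 hv0
    linarith [hl v0 hv0]
  simp only [hc, true_and, mul_neg, Finset.sum_neg_distrib, neg_eq_zero, Left.neg_pos_iff]
  by_cases hN : ∃ l : V → ℝ, (∀ v ∈ s, 0 < l v) ∧ (∀ j < k, ∑ v ∈ s, l v * G v j = 0)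
  · obtain ⟨l, hl, h0⟩ := hN
    rw [ind_pos ⟨l, hl, h0⟩]
    have excl : ∀ l l' : V → ℝ, (∀ v ∈ s, 0 < l v) → (∀ j < k, ∑ v ∈ s, l v * G v j = 0) →
       (∀ v ∈ s, 0 < l' v) → (∀ j < k, ∑ v ∈ s, l' v * G v j = 0) →
       0 < ∑ v ∈ s, l v * G v k → ∑ v ∈ s, l' v * G v k < 0 → False := by
      intro l l' hl h0 hl' h0' hp hn
      set a := ∑ v ∈ s, l v * G v k with ha
      set b := ∑ v ∈ s, l' v * G v k with hb
      have comb : ∀ j, ∑ v ∈ s, ((-b) * l v + a * l' v) * G v j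
          = (-b) * ∑ v ∈ s, l v * G v j + a * ∑ v ∈ s, l' v * G v j := by
        intro j
        rw [Finset.mul_sum, Finset.mul_sum, ← Finset.sum_add_distrib]
        exact Finset.sum_congr rfl (fun v _ => by ring)
      refine key (fun v => (-b) * l v + a * l' v) ?_ ?_ ?_
      · intro v hv
        have := hl v hv
        have := hl' v hv
        have : 0 < -b := by linarith
        positivity
      · intro j hj
        rw [comb, h0 j hj, h0' j hj]; simp
      · rw [comb, ← ha, ← hb]; ring
    rcases lt_or_gt_of_ne (key l hl h0) with h | h
    · rw [ind_neg, ind_pos ⟨l, hl, h0, h⟩, zero_add]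
      rintro ⟨l', hl', h0', h'⟩
      exact excl l' l hl' h0' hl h0 h' h
    · rw [ind_pos ⟨l, hl, h0, h⟩, ind_neg, add_zero]
      rintro ⟨l', hl', h0', h'⟩
      exact excl l l' hl h0 hl' h0' h h'
  · rw [ind_neg hN, ind_neg, ind_neg, add_zero]
    · rintro ⟨l, a, b, _⟩; exact hN ⟨l, a, b⟩
    · rintro ⟨l, a, b, _⟩; exact hN ⟨l, a, b⟩

theorem exists_rel {V : Type*} (G : V → ℕ → ℝ) (k : ℕ) (s : Finset V) (hs : k < s.card) :
    ∃ u : V → ℝ, (∃ v ∈ s, u v ≠ 0) ∧ (∀ v ∉ s, u v = 0) ∧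
      ∀ j < k, ∑ v ∈ s, u v * G v j = 0 := by
  classical
  let M : Matrix (Fin k) s ℝ := fun j v => G v j
  have : M.mulVecLin.ker ≠ ⊥ := by
    apply LinearMap.ker_ne_bot_of_finrank_lt
    simpa using hs
  obtain ⟨x, hx, hx0⟩ := (Submodule.ne_bot_iff _).1 this
  rw [LinearMap.mem_ker] at hx
  refine ⟨fun v => if h : v ∈ s then x ⟨v, h⟩ else 0, ?_, ?_, ?_⟩
  · obtain ⟨v, hv⟩ := Function.ne_iff.1 hx0
    exact ⟨v, v.2, by simpa using hv⟩
  · intro v hv; simp [hv]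
  · intro j hj
    have := congrFun hx ⟨j, hj⟩
    simp only [Matrix.mulVecLin_apply, Matrix.mulVec, dotProduct, M, Pi.zero_apply] at this
    rw [← Finset.sum_coe_sort, ← this]
    exact Finset.sum_congr rfl (fun v _ => by simp [mul_comm])

theorem rel2 {V : Type*} [DecidableEq V] (G : V → ℕ → ℝ) (m k : ℕ) (hk : k + 1 ≤ m)
    (s : Finset V) (hs : GenS G m s) :
    nn G (k + 1) s = ∑ i ∈ s, cc G k (s.erase i) := by
  classical
  by_cases hc : s.card = k + 2
  swap
  · rw [Finset.sum_eq_zero]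
    · simp [nn, ind, hc]
    · intro i hi
      have := Finset.card_erase_of_mem hi
      have := Finset.card_pos.2 ⟨i, hi⟩
      unfold cc
      rw [ind_neg]
      rintro ⟨h, _⟩; omega
  have hce : ∀ i ∈ s, (s.erase i).card = k + 1 := by
    intro i hi; rw [Finset.card_erase_of_mem hi]; omega
  -- vanishing on a facet
  have facet : ∀ i ∈ s, ∀ μ : V → ℝ, μ i = 0 → (∀ j < k + 1, ∑ v ∈ s, μ v * G v j = 0) →
      ∀ v ∈ s, μ v = 0 := by
    intro i hi μ hμ h0 v hv
    by_cases hvi : v = i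
    · rw [hvi, hμ]
    refine hs (s.erase i) (Finset.erase_subset _ _) (by rw [hce i hi]; omega) μ ?_ v
      (Finset.mem_erase.2 ⟨hvi, hv⟩)
    intro j hj
    rw [hce i hi] at hj
    rw [Finset.sum_erase _ (by rw [hμ, zero_mul])]
    exact h0 j hj
  obtain ⟨u, ⟨v1, hv1, hv1u⟩, -, hu0⟩ := exists_rel G (k + 1) s (by omega)
  have hune : ∀ v ∈ s, u v ≠ 0 := fun v hv h => hv1u (facet v hv u h hu0 v1 hv1)
  obtain ⟨w', ⟨v2, hv2, hv2w⟩, hw'out, hw'0⟩ := exists_rel G k (s.erase v1)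
    (by rw [hce v1 hv1]; omega)
  have hw1 : w' v1 = 0 := hw'out v1 (by simp)
  have hw's : ∀ j, ∑ v ∈ s.erase v1, w' v * G v j = ∑ v ∈ s, w' v * G v j := fun j =>
    Finset.sum_erase _ (by rw [hw1, zero_mul])
  have hφ : ∑ v ∈ s, w' v * G v k ≠ 0 := by
    intro h
    apply hv2w
    refine facet v1 hv1 w' hw1 ?_ v2 (Finset.mem_of_mem_erase hv2)
    intro j hj
    rcases Nat.lt_or_ge j k with h' | h'
    · rw [← hw's, hw'0 j h']
    · rwa [show j = k by omega]
  set φ := ∑ v ∈ s, w' v * G v k with hφd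
  obtain ⟨w, hw0, hwk⟩ : ∃ w : V → ℝ, (∀ j < k, ∑ v ∈ s, w v * G v j = 0) ∧
      ∑ v ∈ s, w v * G v k = 1 := by
    have comb : ∀ j, ∑ v ∈ s, (φ⁻¹ * w' v) * G v j = φ⁻¹ * ∑ v ∈ s, w' v * G v j := by
      intro j; rw [Finset.mul_sum]; exact Finset.sum_congr rfl (fun v _ => by ring)
    refine ⟨fun v => φ⁻¹ * w' v, fun j hj => ?_, ?_⟩
    · rw [comb, ← hw's, hw'0 j hj, mul_zero]
    · rw [comb, ← hφd, inv_mul_cancel₀ hφ]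
  have lin : ∀ (a b : V → ℝ) (c : ℝ) (j : ℕ), ∑ v ∈ s, (a v - c * b v) * G v j
      = ∑ v ∈ s, a v * G v j - c * ∑ v ∈ s, b v * G v j := by
    intro a b c j
    rw [Finset.mul_sum, ← Finset.sum_sub_distrib]
    exact Finset.sum_congr rfl (fun v _ => by ring)
  set r : V → ℝ := fun v => w v / u v with hr
  have hrw : ∀ v ∈ s, w v = r v * u v := fun v hv => by
    simp only [hr]; field_simp [hune v hv]
  have hrinj : ∀ a ∈ s, ∀ b ∈ s, a ≠ b → r a ≠ r b := by
    intro a ha b hb hab h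
    have hz : ∀ v ∈ s, w v - r a * u v = 0 := by
      intro v hv
      by_cases hva : v = a
      · rw [hva, hrw a ha, sub_self]
      by_cases hvb : v = b
      · rw [hvb, hrw b hb, h, sub_self]
      have hcard : ((s.erase a).erase b).card = k := by
        rw [Finset.card_erase_of_mem (Finset.mem_erase.2 ⟨hab.symm, hb⟩), hce a ha]; rfl
      refine hs ((s.erase a).erase b)
        ((Finset.erase_subset _ _).trans (Finset.erase_subset _ _)) (by omega)
        (fun v => w v - r a * u v) ?_ v (by simp [hva, hvb, hv])
      intro j hj
      rw [hcard] at hj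
      rw [Finset.sum_erase _ (by rw [hrw b hb, h, sub_self, zero_mul]),
        Finset.sum_erase _ (by rw [hrw a ha, sub_self, zero_mul]), lin, hw0 j hj,
        hu0 j (by omega)]
      simp
    have h1 := lin w u (r a) k
    rw [hwk, hu0 k (by omega), Finset.sum_eq_zero (fun v hv => by rw [hz v hv, zero_mul])] at h1
    norm_num at h1
  have hcc : ∀ i ∈ s, cc G k (s.erase i) =
      ind (∀ j ∈ s, j ≠ i → 0 < u j * (r j - r i)) := by
    intro i hi
    unfold cc
    refine congrArg ind (propext ?_)
    rw [hce i hi]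
    simp only [true_and]
    have hval : ∀ j ∈ s, u j * (r j - r i) = w j - r i * u j := by
      intro j hj; rw [hrw j hj]; ring
    constructor
    · rintro ⟨l, hl, h0, hp⟩ j hj hji
      let l' : V → ℝ := fun v => if v = i then 0 else l v
      have hl's : ∀ j, ∑ v ∈ s, l' v * G v j = ∑ v ∈ s.erase i, l v * G v j := by
        intro j
        rw [← Finset.sum_erase s (a := i) (by simp [l'])]
        refine Finset.sum_congr rfl (fun v hv => ?_)
        simp only [l', if_neg (Finset.ne_of_mem_erase hv)]
      set p := ∑ v ∈ s.erase i, l v * G v k with hpd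
      have := facet i hi (fun v => l' v - p * (w v - r i * u v))
        (by simp only [l', if_true]; rw [hrw i hi]; ring) (by
          intro j hj
          rw [lin l' (fun v => w v - r i * u v), lin w u, hl's, hu0 j hj]
          rcases Nat.lt_or_ge j k with h' | h'
          · rw [h0 j h', hw0 j h']; ring
          · rw [show j = k by omega, hwk, ← hpd]; ring) j hj
      simp only [l', if_neg hji] at this
      have hlj := hl j (Finset.mem_erase.2 ⟨hji, hj⟩)
      rw [hval j hj]
      have h3 : 0 < p * (w j - r i * u j) := by linarith
      exact (mul_pos_iff_of_pos_left hp).1 h3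
    · intro h
      have hs' : ∀ j, ∑ v ∈ s.erase i, (w v - r i * u v) * G v j
          = ∑ v ∈ s, (w v - r i * u v) * G v j := fun j =>
        Finset.sum_erase _ (by rw [hrw i hi, sub_self, zero_mul])
      refine ⟨fun v => w v - r i * u v, ?_, ?_, ?_⟩
      · intro v hv
        have hv' := Finset.mem_of_mem_erase hv
        show 0 < w v - r i * u v
        rw [← hval v hv']
        exact h v hv' (Finset.ne_of_mem_erase hv)
      · intro j hj
        rw [hs', lin, hw0 j hj, hu0 j (by omega)]; ring
      · rw [hs', lin, hwk, hu0 k (by omega)]; norm_num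
  rw [Finset.sum_congr rfl hcc, parity s u r hune hrinj]
  unfold nn
  simp only [hc, true_and]
  by_cases hP : ∀ v ∈ s, 0 < u v
  · rw [ind_pos ⟨u, hP, hu0⟩, ind_pos hP, ind_neg (fun h => by linarith [h v1 hv1, hP v1 hv1]), add_zero]
  by_cases hQ : ∀ v ∈ s, u v < 0
  · rw [ind_pos ⟨fun v => - u v, fun v hv => by linarith [hQ v hv], fun j hj => by
      simp [hu0 j hj]⟩, ind_neg hP, ind_pos hQ, zero_add]
  rw [ind_neg, ind_neg hP, ind_neg hQ, add_zero]
  rintro ⟨l, hl, h0⟩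
  have hz := facet v1 hv1 (fun v => l v - (l v1 / u v1) * u v) (by field_simp [hune v1 hv1]; ring)
    (fun j hj => by rw [lin, h0 j hj, hu0 j hj]; ring)
  rcases lt_or_gt_of_ne hv1u with h | h
  · apply hQ
    intro v hv
    have h1 := hz v hv
    have h2 := hl v hv
    have h3 : l v1 / u v1 < 0 := div_neg_of_pos_of_neg (hl v1 hv1) h
    by_contra hcon
    nlinarith
  · apply hP
    intro v hv
    have h1 := hz v hv
    have h2 := hl v hv
    have h3 : 0 < l v1 / u v1 := div_pos (hl v1 hv1) h
    by_contra hcon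
    nlinarith

end Tz

namespace Tz

def pr {L : Type*} : L ⊕ L → L := Sum.elim id id

def sgn {L : Type*} : L ⊕ L → ℝ := Sum.elim (fun _ => 1) (fun _ => -1)

def sg {L : Type*} (g : L → ℕ → ℝ) (v : L ⊕ L) (j : ℕ) : ℝ := sgn v * g (pr v) j

theorem sgn_ne {L : Type*} (v : L ⊕ L) : sgn v ≠ 0 := by
  rcases v with v | v <;> simp [sgn]

open Filter Topology in
theorem perturb {L : Type*} [Fintype L] (m : ℕ) (g : L → ℕ → ℝ) (X : Finset (Finset (L ⊕ L)))
    (hX : ∀ s ∈ X, ∃ y : ℕ → ℝ, ∀ v ∈ s, 0 < ∑ j ∈ Finset.range m, y j * sg g v j) :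
    ∃ g' : L → ℕ → ℝ,
      (∀ s : Finset (L ⊕ L), (∀ l, ¬ (Sum.inl l ∈ s ∧ Sum.inr l ∈ s)) → GenS (sg g') m s) ∧
      ∀ s ∈ X, ∃ y : ℕ → ℝ, ∀ v ∈ s, 0 < ∑ j ∈ Finset.range m, y j * sg g' v j := by
  classical
  let t : L → ℝ := fun l => ((Fintype.equivFin L l : Fin _) : ℕ)
  have ht : Function.Injective t := by
    intro a b h
    have : ((Fintype.equivFin L a : Fin _) : ℕ) = (Fintype.equivFin L b : Fin _) :=
      Nat.cast_injective (R := ℝ) h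
    exact (Fintype.equivFin L).injective (Fin.ext this)
  let G : ℝ → L → ℕ → ℝ := fun ε l j => g l j + ε * t l ^ j
  have hgen : ∀ᶠ ε in 𝓝[>] (0 : ℝ), ∀ k : Fin (m + 1), ∀ l : Fin k ↪ L,
      (Matrix.of (fun i j : Fin k => G ε (l i) j)).det ≠ 0 := by
    rw [eventually_all]; intro k
    rw [eventually_all]; intro l
    let A : Matrix (Fin k) (Fin k) ℝ := Matrix.vandermonde (t ∘ l)
    let B : Matrix (Fin k) (Fin k) ℝ := Matrix.of fun i j => g (l i) j
    let p : Polynomial ℝ := ((Polynomial.X : Polynomial ℝ) • A.map Polynomial.C + B.map Polynomial.C).det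
    have hp : p ≠ 0 := by
      intro h
      have h1 := Polynomial.coeff_det_X_add_C_card A B
      change p.coeff _ = _ at h1
      rw [h, Polynomial.coeff_zero] at h1
      exact Matrix.det_vandermonde_ne_zero_iff.2 (ht.comp l.injective) h1.symm
    have hev : ∀ ε, (Matrix.of (fun i j : Fin k => G ε (l i) j)).det = p.eval ε := by
      intro ε
      rw [← Polynomial.coe_evalRingHom, RingHom.map_det]
      congr 1
      ext i j
      simp [A, B, G, Matrix.vandermonde, add_comm]
    have hfin : (p.rootSet ℝ).Finite := p.rootSet_finite ℝ
    have : ∀ᶠ ε in 𝓝[≠] (0 : ℝ), p.eval ε ≠ 0 := by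
      have h2 : (↑(p.roots.toFinset) : Set ℝ).Finite := Finset.finite_toSet _
      have h3 : ((↑(p.roots.toFinset) : Set ℝ) \ {0}).Finite := h2.subset Set.sdiff_subset
      have h4 : ((↑(p.roots.toFinset) : Set ℝ) \ {0})ᶜ ∈ 𝓝 (0 : ℝ) :=
        h3.isClosed.isOpen_compl.mem_nhds (by simp)
      rw [eventually_nhdsWithin_iff]
      filter_upwards [h4] with x hx hx0 h
      apply hx
      refine ⟨?_, hx0⟩
      simp [hp, h]
    have h5 : 𝓝[>] (0 : ℝ) ≤ 𝓝[≠] 0 := nhdsWithin_mono _ (fun x hx => ne_of_gt hx)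
    filter_upwards [h5 this] with ε hε
    rw [hev]; exact hε
  have hpos : ∀ᶠ ε in 𝓝[>] (0 : ℝ), ∀ s ∈ X, ∃ y : ℕ → ℝ,
      ∀ v ∈ s, 0 < ∑ j ∈ Finset.range m, y j * sg (G ε) v j := by
    rw [Filter.eventually_all_finset]
    intro s hs
    obtain ⟨y, hy⟩ := hX s hs
    have : ∀ᶠ ε in 𝓝[>] (0 : ℝ), ∀ v ∈ s, 0 < ∑ j ∈ Finset.range m, y j * sg (G ε) v j := by
      rw [Filter.eventually_all_finset]
      intro v hv
      apply Filter.Eventually.filter_mono nhdsWithin_le_nhds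
      have hc : Continuous (fun ε => ∑ j ∈ Finset.range m, y j * sg (G ε) v j) := by
        simp only [sg, G]; fun_prop
      refine hc.continuousAt.eventually (lt_mem_nhds ?_)
      have := hy v hv
      simpa [sg, G] using this
    filter_upwards [this] with ε hε
    exact ⟨y, hε⟩
  obtain ⟨ε, h1, h2⟩ := (hgen.and hpos).exists
  refine ⟨G ε, ?_, h2⟩
  intro s hs t' ht' hcard μ hμ
  let e := t'.equivFin.symm
  have hinj : Function.Injective (fun i => pr (e i : L ⊕ L)) := by
    intro a b hab
    have hab' : pr (e a : L ⊕ L) = pr (e b : L ⊕ L) := hab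
    apply e.injective
    apply Subtype.ext
    have ha := ht' (e a).2
    have hb := ht' (e b).2
    generalize (e a : L ⊕ L) = x at *
    generalize (e b : L ⊕ L) = y at *
    rcases x with x | x <;> rcases y with y | y <;> simp only [pr, Sum.elim_inl, Sum.elim_inr, id] at hab'
    · rw [hab']
    · subst hab'; exact (hs x ⟨ha, hb⟩).elim
    · subst hab'; exact (hs x ⟨hb, ha⟩).elim
    · rw [hab']
  have hdet := h1 ⟨t'.card, by omega⟩ ⟨_, hinj⟩
  have hz := Matrix.eq_zero_of_vecMul_eq_zero hdet (v := fun i => μ (e i) * sgn (e i : L ⊕ L)) (by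
    ext j
    have := hμ j j.2
    rw [← Finset.sum_coe_sort, ← Equiv.sum_comp e] at this
    simp only [Matrix.vecMul, dotProduct, Pi.zero_apply, Matrix.of_apply]
    rw [← this]
    refine Finset.sum_congr rfl (fun i _ => ?_)
    simp only [sg]; simp; ring)
  intro v hv
  have := congrFun hz (e.symm ⟨v, hv⟩)
  simpa [sgn_ne] using this

end Tz

namespace Tz

open MvPolynomial

abbrev P (V : Type) := MvPolynomial V (ZMod 2)

noncomputable def mono {V : Type} (A : Finset V) : P V := ∏ i ∈ A, X i

noncomputable def bd {V : Type} : P V →ₗ[ZMod 2] P V :=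
  (mkDerivation (ZMod 2) (fun _ : V => (1 : P V))).toLinearMap

theorem bd_X {V : Type} (v : V) : bd (X v : P V) = 1 := by
  simp [bd, mkDerivation_X]

theorem bd_one {V : Type} : bd (1 : P V) = 0 := by
  simp [bd]

theorem bd_mul {V : Type} (p q : P V) : bd (p * q) = p * bd q + q * bd p := by
  simp [bd]

theorem bd_mono {V : Type} [DecidableEq V] (A : Finset V) :
    bd (mono A) = ∑ i ∈ A, mono (A.erase i) := by
  induction A using Finset.induction_on with
  | empty => simp [mono, bd_one]
  | insert a A ha ih =>
    rw [Finset.sum_insert ha, Finset.erase_insert ha]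
    have h1 : mono (insert a A) = X a * mono A := by simp [mono, Finset.prod_insert ha]
    rw [h1, bd_mul, ih, bd_X, mul_one, add_comm, Finset.mul_sum]
    congr 1
    refine Finset.sum_congr rfl (fun i hi => ?_)
    have hai : a ≠ i := fun h => ha (h ▸ hi)
    rw [Finset.erase_insert_of_ne hai]
    simp [mono, Finset.prod_insert, ha]

theorem bd_rename {V V' : Type} (f : V → V') (p : P V) : bd (rename f p) = rename f (bd p) := by
  induction p using MvPolynomial.induction_on with
  | C a => simp [bd]
  | add p q hp hq => simp [hp, hq]
  | mul_X p v hp => simp [bd_mul, hp, bd_X]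

theorem add_self {V : Type} (p : P V) : p + p = 0 := CharTwo.add_self_eq_zero p

noncomputable def ext {V M : Type} [AddCommGroup M] [Module (ZMod 2) M] (s : Finset V → M) :
    P V →ₗ[ZMod 2] M :=
  (basisMonomials V (ZMod 2)).constr (ZMod 2) (fun m => s m.support)

theorem ext_mono {V M : Type} [AddCommGroup M] [Module (ZMod 2) M] (s : Finset V → M)
    (A : Finset V) : ext s (mono A) = s A := by
  classical
  have : mono A = basisMonomials V (ZMod 2) (∑ i ∈ A, Finsupp.single i 1) := by
    rw [coe_basisMonomials, mono]
    simp only [X]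
    rw [MvPolynomial.monomial_sum_one]
  rw [this, ext, Module.Basis.constr_basis]
  congr 1
  ext i
  simp [Finsupp.finsetSum_apply, Finsupp.single_apply]

theorem agree {V M : Type} [AddCommGroup M] [Module (ZMod 2) M] (f f' : P V →ₗ[ZMod 2] M)
    (S : Set (Finset V)) (h : ∀ A ∈ S, f (mono A) = f' (mono A)) (p : P V)
    (hp : p ∈ Submodule.span (ZMod 2) (mono '' S)) : f p = f' p := by
  refine LinearMap.eqOn_span (f := f) (g := f') ?_ hp
  rintro _ ⟨A, hA, rfl⟩
  exact h A hA

theorem maps {V V' : Type} (f : P V →ₗ[ZMod 2] P V')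
    (S : Set (Finset V)) (N : Submodule (ZMod 2) (P V')) (h : ∀ A ∈ S, f (mono A) ∈ N) (p : P V)
    (hp : p ∈ Submodule.span (ZMod 2) (mono '' S)) : f p ∈ N := by
  have : Submodule.span (ZMod 2) (mono '' S) ≤ N.comap f := by
    rw [Submodule.span_le]
    rintro _ ⟨A, hA, rfl⟩
    exact h A hA
  exact this hp

/-! subdivision -/

noncomputable def sd {α : Type} [DecidableEq α] (A : Finset α) : P (Finset α) :=
  if A = ∅ then 1 else X A * ∑ i : A, sd (A.erase i)
termination_by A.card
decreasing_by exact Finset.card_erase_lt_of_mem i.2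

theorem sd_empty {α : Type} [DecidableEq α] : sd (∅ : Finset α) = 1 := by
  rw [sd]; simp

theorem sd_ne {α : Type} [DecidableEq α] {A : Finset α} (h : A ≠ ∅) :
    sd A = X A * ∑ i ∈ A, sd (A.erase i) := by
  rw [sd, if_neg h, Finset.sum_coe_sort A (fun i => sd (A.erase i))]

theorem double_zero {α V : Type} [DecidableEq α] (A : Finset α) (f : Finset α → P V) :
    ∑ i ∈ A, ∑ j ∈ A.erase i, f ((A.erase i).erase j) = 0 := by
  rw [Finset.sum_sigma']
  refine Finset.sum_involution (fun x _ => ⟨x.2, x.1⟩) ?_ ?_ ?_ ?_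
  · rintro ⟨i, j⟩ _
    simp only
    rw [Finset.erase_right_comm, add_self]
  · rintro ⟨i, j⟩ h _ he
    simp at h he
    exact h.2.1 he.1
  · rintro ⟨i, j⟩ h
    simp at h ⊢
    exact ⟨h.2.2, fun h' => h.2.1 h'.symm, h.1⟩
  · rintro ⟨i, j⟩ h
    rfl

theorem bd_sd {α : Type} [DecidableEq α] (A : Finset α) :
    bd (sd A) = ∑ i ∈ A, sd (A.erase i) := by
  induction A using Finset.strongInduction with
  | _ A ih =>
    by_cases h : A = ∅
    · subst h; simp [sd_empty, bd_one]
    · rw [sd_ne h, bd_mul, bd_X, mul_one, map_sum,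
        Finset.sum_congr rfl (fun i hi => ih _ (Finset.erase_ssubset hi)), double_zero, mul_zero,
        zero_add]

def sdset {α : Type} (A : Finset α) : Set (Finset (Finset α)) :=
  {𝒜 | (∀ B ∈ 𝒜, B.Nonempty ∧ B ⊆ A) ∧ ∀ B ∈ 𝒜, ∀ C ∈ 𝒜, B ⊆ C ∨ C ⊆ B}

theorem sd_mem {α : Type} [DecidableEq α] (A : Finset α) :
    sd A ∈ Submodule.span (ZMod 2) (mono '' sdset A) := by
  induction A using Finset.strongInduction with
  | _ A ih =>
    by_cases h : A = ∅
    · subst h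
      rw [sd_empty]
      refine Submodule.subset_span ⟨∅, ?_, by simp [mono]⟩
      simp [sdset]
    · rw [sd_ne h, Finset.mul_sum]
      refine Submodule.sum_mem _ (fun i hi => ?_)
      refine maps (LinearMap.mulLeft (ZMod 2) (X A)) (sdset (A.erase i)) _ ?_ _
        (ih _ (Finset.erase_ssubset hi))
      rintro 𝒜 ⟨h1, h2⟩
      have hA : A ∉ 𝒜 := fun hA => Finset.notMem_erase i A ((h1 A hA).2 hi)
      refine Submodule.subset_span ⟨insert A 𝒜, ⟨?_, ?_⟩, ?_⟩
      · intro B hB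
        rcases Finset.mem_insert.1 hB with rfl | hB
        · exact ⟨Finset.nonempty_of_ne_empty h, subset_rfl⟩
        · exact ⟨(h1 B hB).1, (h1 B hB).2.trans (Finset.erase_subset _ _)⟩
      · have hs : ∀ B ∈ 𝒜, B ⊆ A := fun B hB => (h1 B hB).2.trans (Finset.erase_subset _ _)
        intro B hB C hC
        rcases Finset.mem_insert.1 hB with hB' | hB' <;>
          rcases Finset.mem_insert.1 hC with hC' | hC'
        · rw [hB', hC']; exact Or.inl subset_rfl
        · rw [hB']; exact Or.inr (hs C hC')
        · rw [hC']; exact Or.inl (hs B hB')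
        · exact h2 B hB' C hC'
      · simp [mono, Finset.prod_insert hA]

noncomputable def ee {W : Type} [DecidableEq W] (σ : Finset W) : P (Finset (Finset W)) :=
  ext sd (sd σ)

theorem bd_ee {W : Type} [DecidableEq W] (σ : Finset W) :
    bd (ee σ) = ∑ i ∈ σ, ee (σ.erase i) := by
  have := agree (bd ∘ₗ ext sd) (ext sd ∘ₗ bd) (sdset σ) (by
    intro A _
    simp only [LinearMap.comp_apply, ext_mono, bd_sd, bd_mono, map_sum]) _ (sd_mem σ)
  simp only [LinearMap.comp_apply, bd_sd, map_sum] at this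
  exact this

def sd2set {W : Type} (σ : Finset W) : Set (Finset (Finset (Finset W))) :=
  {𝒜 | (∀ F ∈ 𝒜, F.Nonempty ∧ F ∈ sdset σ) ∧ ∀ B ∈ 𝒜, ∀ C ∈ 𝒜, B ⊆ C ∨ C ⊆ B}

theorem ee_mem {W : Type} [DecidableEq W] (σ : Finset W) :
    ee σ ∈ Submodule.span (ZMod 2) (mono '' sd2set σ) := by
  refine maps (ext sd) (sdset σ) _ ?_ _ (sd_mem σ)
  intro A hA
  rw [ext_mono]
  refine Submodule.span_mono (Set.image_mono ?_) (sd_mem A)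
  rintro 𝒜 ⟨h1, h2⟩
  refine ⟨fun F hF => ⟨(h1 F hF).1, ?_, ?_⟩, h2⟩
  · exact fun B hB => hA.1 B ((h1 F hF).2 hB)
  · exact fun B hB C hC => hA.2 B ((h1 F hF).2 hB) C ((h1 F hF).2 hC)

theorem ee_empty {W : Type} [DecidableEq W] : ee (∅ : Finset W) = 1 := by
  rw [ee, sd_empty, show (1 : P (Finset W)) = mono ∅ by simp [mono], ext_mono, sd_empty]

theorem sd_single {W : Type} [DecidableEq W] (w : W) : sd ({w} : Finset W) = X {w} := by
  rw [sd_ne (by simp)]; simp [sd_empty]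

theorem ee_single {W : Type} [DecidableEq W] (w : W) : ee ({w} : Finset W) = X {{w}} := by
  rw [ee, sd_single, show (X {w} : P (Finset W)) = mono {{w}} by simp [mono], ext_mono, sd_single]

/-! join -/

noncomputable def TT {V : Type} : P (V ⊕ V) →ₗ[ZMod 2] P (V ⊕ V) := (rename Sum.swap).toLinearMap

theorem mono_disjSum {V : Type} (B C : Finset V) :
    mono (B.disjSum C) = rename Sum.inl (mono B) * rename Sum.inr (mono C) := by
  simp [mono, map_prod]

theorem TT_mul {V : Type} (p q : P (V ⊕ V)) : TT (p * q) = TT p * TT q := by simp [TT]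

theorem TT_inl {V : Type} (p : P V) : TT (rename Sum.inl p) = rename Sum.inr p := by
  simp only [TT, AlgHom.toLinearMap_apply, rename_rename]
  rfl

theorem TT_inr {V : Type} (p : P V) : TT (rename Sum.inr p) = rename Sum.inl p := by
  simp only [TT, AlgHom.toLinearMap_apply, rename_rename]
  rfl

theorem TT_mono {V : Type} (B C : Finset V) : TT (mono (B.disjSum C)) = mono (C.disjSum B) := by
  rw [mono_disjSum, mono_disjSum, TT_mul, TT_inl, TT_inr, mul_comm]

noncomputable def Th {W : Type} [DecidableEq W] :
    P (W ⊕ W) →ₗ[ZMod 2] P (Finset (Finset W) ⊕ Finset (Finset W)) :=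
  ext (fun A => rename Sum.inl (ee A.toLeft) * rename Sum.inr (ee A.toRight))

theorem Th_mono {W : Type} [DecidableEq W] (B C : Finset W) :
    Th (mono (B.disjSum C)) = rename Sum.inl (ee B) * rename Sum.inr (ee C) := by
  rw [Th, ext_mono]; simp

theorem Th_TT {W : Type} [DecidableEq W] (B C : Finset W) :
    Th (TT (mono (B.disjSum C))) = TT (Th (mono (B.disjSum C))) := by
  rw [TT_mono, Th_mono, Th_mono, TT_mul, TT_inl, TT_inr, mul_comm]

theorem Th_bd {W : Type} [DecidableEq W] (B C : Finset W) :
    Th (bd (mono (B.disjSum C))) = bd (Th (mono (B.disjSum C))) := by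
  rw [Th_mono, bd_mul, bd_rename, bd_rename, bd_ee, bd_ee]
  rw [mono_disjSum, bd_mul, bd_rename, bd_rename, bd_mono, bd_mono]
  simp only [map_add, map_sum, Finset.mul_sum]
  congr 1
  · refine Finset.sum_congr rfl (fun i _ => ?_)
    rw [← mono_disjSum, Th_mono]
  · refine Finset.sum_congr rfl (fun i _ => ?_)
    rw [mul_comm, ← mono_disjSum, Th_mono, mul_comm]

end Tz

namespace Tz

open MvPolynomial

abbrev WW (d : ℕ) := Fin (d + 1) × Fin 3

def gset (d i : ℕ) : Set (Finset (WW d ⊕ WW d)) :=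
  {A | ∃ B C : Finset (WW d), A = B.disjSum C ∧ Disjoint B C ∧ B.card ≤ i ∧ C.card ≤ i ∧
    (∀ w ∈ B, w.1.val < i) ∧ ∀ w ∈ C, w.1.val < i}

noncomputable def ca (d i : ℕ) : P (WW d ⊕ WW d) := X (Sum.inl (Fin.ofNat (d + 1) i, 0))

noncomputable def pc (d i : ℕ) (j k : Fin 3) : P (WW d ⊕ WW d) :=
  X (Sum.inl (Fin.ofNat (d + 1) i, j)) * X (Sum.inr (Fin.ofNat (d + 1) i, k))

noncomputable def cb (d i : ℕ) : P (WW d ⊕ WW d) := pc d i 0 1 + pc d i 2 1 + pc d i 2 0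

noncomputable def ZZ (d : ℕ) : ℕ → P (WW d ⊕ WW d)
  | 0 => 1
  | i + 1 => ZZ d i * (cb d i + TT (cb d i))

theorem TT_X {V : Type} (v : V ⊕ V) : TT (X v) = X v.swap := by simp [TT]

theorem TT_TT {V : Type} (p : P (V ⊕ V)) : TT (TT p) = p := by
  simp only [TT, AlgHom.toLinearMap_apply, rename_rename]
  rw [show (Sum.swap ∘ Sum.swap : V ⊕ V → V ⊕ V) = id by ext v; simp, rename_id_apply]

theorem TT_pc (d i : ℕ) (j k : Fin 3) : TT (pc d i j k) = pc d i k j := by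
  simp [pc, TT_mul, TT_X, mul_comm]

theorem TT_ZZ (d i : ℕ) : TT (ZZ d i) = ZZ d i := by
  induction i with
  | zero => simp [ZZ, TT]
  | succ i ih => rw [ZZ, TT_mul, ih, map_add, TT_TT, add_comm]

theorem bd_cb (d i : ℕ) : bd (cb d i) = ca d i + TT (ca d i) := by
  simp only [cb, pc, map_add, bd_mul, bd_X, mul_one, ca, TT_X, Sum.swap_inl]
  generalize (X (Sum.inl (Fin.ofNat (d + 1) i, 0)) : P (WW d ⊕ WW d)) = a0
  generalize (X (Sum.inl (Fin.ofNat (d + 1) i, 2)) : P (WW d ⊕ WW d)) = a2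
  generalize (X (Sum.inr (Fin.ofNat (d + 1) i, 1)) : P (WW d ⊕ WW d)) = b1
  linear_combination add_self a2 + add_self b1

theorem bd_TT {V : Type} (p : P (V ⊕ V)) : bd (TT p) = TT (bd p) := bd_rename _ p

theorem bd_ZZ (d i : ℕ) : bd (ZZ d i) = 0 := by
  induction i with
  | zero => simp [ZZ, bd_one]
  | succ i ih =>
    rw [ZZ, bd_mul, ih, map_add, bd_TT, bd_cb, map_add, TT_TT, add_comm (TT (ca d i)), add_self]
    simp

noncomputable def hh (d k : ℕ) : P (WW d ⊕ WW d) :=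
  ZZ d (k / 2) * (if k % 2 = 0 then ca d (k / 2) else cb d (k / 2))

theorem bd_hh (d k : ℕ) : bd (hh d (k + 1)) = hh d k + TT (hh d k) := by
  rcases Nat.even_or_odd' k with ⟨i, rfl | rfl⟩
  · have h1 : (2 * i + 1) / 2 = i := by omega
    have h2 : (2 * i + 1) % 2 ≠ 0 := by omega
    have h3 : (2 * i) / 2 = i := by omega
    have h4 : (2 * i) % 2 = 0 := by omega
    simp only [hh, h1, h3]
    rw [if_neg h2, if_pos h4, bd_mul, bd_ZZ, bd_cb, TT_mul, TT_ZZ]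
    ring
  · have h1 : (2 * i + 1 + 1) / 2 = i + 1 := by omega
    have h2 : (2 * i + 1 + 1) % 2 = 0 := by omega
    have h3 : (2 * i + 1) / 2 = i := by omega
    have h4 : (2 * i + 1) % 2 ≠ 0 := by omega
    simp only [hh, h1, h3]
    rw [if_neg h4, if_pos h2, bd_mul, bd_ZZ, TT_mul, TT_ZZ, ca, bd_X, ZZ]
    ring

theorem mono_mul_disj {V : Type} [DecidableEq V] (A B : Finset V) (h : Disjoint A B) :
    mono A * mono B = mono (A ∪ B) := by
  simp [mono, Finset.prod_union h]

theorem step (d i : ℕ) (p : P (WW d ⊕ WW d)) (hp : p ∈ Submodule.span (ZMod 2) (mono '' gset d i))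
    (B C : Finset (WW d)) (hBC : Disjoint B C) (hB : B.card ≤ 1) (hC : C.card ≤ 1)
    (hBi : ∀ w ∈ B, w.1.val = i) (hCi : ∀ w ∈ C, w.1.val = i) :
    p * mono (B.disjSum C) ∈ Submodule.span (ZMod 2) (mono '' gset d (i + 1)) := by
  refine maps (LinearMap.mulRight (ZMod 2) (mono (B.disjSum C))) (gset d i) _ ?_ p hp
  rintro _ ⟨B', C', rfl, h1, h2, h3, h4, h5⟩
  have dj : ∀ S T : Finset (WW d), (∀ w ∈ S, w.1.val < i) → (∀ w ∈ T, w.1.val = i) →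
      Disjoint S T := by
    intro S T hS hT
    rw [Finset.disjoint_left]
    intro w hw hw'
    have := hS w hw
    have := hT w hw'
    omega
  refine Submodule.subset_span ⟨(B' ∪ B).disjSum (C' ∪ C), ⟨B' ∪ B, C' ∪ C, rfl, ?_, ?_, ?_, ?_, ?_⟩, ?_⟩
  · simp only [Finset.disjoint_union_left, Finset.disjoint_union_right]
    exact ⟨⟨h1, (dj C' B h5 hBi).symm⟩, dj B' C h4 hCi, hBC⟩
  · exact (Finset.card_union_le _ _).trans (by omega)
  · exact (Finset.card_union_le _ _).trans (by omega)
  · intro w hw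
    rcases Finset.mem_union.1 hw with h | h
    · have := h4 w h; omega
    · have := hBi w h; omega
  · intro w hw
    rcases Finset.mem_union.1 hw with h | h
    · have := h5 w h; omega
    · have := hCi w h; omega
  · rw [LinearMap.mulRight_apply, mono_disjSum, mono_disjSum, mono_disjSum,
      ← mono_mul_disj _ _ (dj B' B h4 hBi), ← mono_mul_disj _ _ (dj C' C h5 hCi), map_mul, map_mul]
    ring

theorem step_pc (d i : ℕ) (hi : i ≤ d) (p : P (WW d ⊕ WW d))
    (hp : p ∈ Submodule.span (ZMod 2) (mono '' gset d i)) (j k : Fin 3) (hjk : j ≠ k) :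
    p * pc d i j k ∈ Submodule.span (ZMod 2) (mono '' gset d (i + 1)) := by
  have := step d i p hp {(Fin.ofNat (d + 1) i, j)} {(Fin.ofNat (d + 1) i, k)}
    (by simp [hjk]) (by simp) (by simp)
    (by simp [Nat.mod_eq_of_lt (Nat.lt_succ_of_le hi)])
    (by simp [Nat.mod_eq_of_lt (Nat.lt_succ_of_le hi)])
  rw [mono_disjSum] at this
  simpa [mono, pc] using this

theorem step_ca (d i : ℕ) (hi : i ≤ d) (p : P (WW d ⊕ WW d))
    (hp : p ∈ Submodule.span (ZMod 2) (mono '' gset d i)) :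
    p * ca d i ∈ Submodule.span (ZMod 2) (mono '' gset d (i + 1)) := by
  have := step d i p hp {(Fin.ofNat (d + 1) i, 0)} ∅
    (by simp) (by simp) (by simp)
    (by simp [Nat.mod_eq_of_lt (Nat.lt_succ_of_le hi)])
    (by simp)
  rw [mono_disjSum] at this
  simpa [mono, ca] using this

theorem step_cb (d i : ℕ) (hi : i ≤ d) (p : P (WW d ⊕ WW d))
    (hp : p ∈ Submodule.span (ZMod 2) (mono '' gset d i)) :
    p * cb d i ∈ Submodule.span (ZMod 2) (mono '' gset d (i + 1)) := by
  rw [cb, mul_add, mul_add]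
  exact Submodule.add_mem _ (Submodule.add_mem _ (step_pc d i hi p hp _ _ (by decide))
    (step_pc d i hi p hp _ _ (by decide))) (step_pc d i hi p hp _ _ (by decide))

theorem step_Tcb (d i : ℕ) (hi : i ≤ d) (p : P (WW d ⊕ WW d))
    (hp : p ∈ Submodule.span (ZMod 2) (mono '' gset d i)) :
    p * TT (cb d i) ∈ Submodule.span (ZMod 2) (mono '' gset d (i + 1)) := by
  rw [cb, map_add, map_add, TT_pc, TT_pc, TT_pc, mul_add, mul_add]
  exact Submodule.add_mem _ (Submodule.add_mem _ (step_pc d i hi p hp _ _ (by decide))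
    (step_pc d i hi p hp _ _ (by decide))) (step_pc d i hi p hp _ _ (by decide))

theorem ZZ_mem (d i : ℕ) (hi : i ≤ d + 1) :
    ZZ d i ∈ Submodule.span (ZMod 2) (mono '' gset d i) := by
  induction i with
  | zero => exact Submodule.subset_span ⟨∅, ⟨∅, ∅, by simp⟩, by simp [mono, ZZ]⟩
  | succ i ih =>
    rw [ZZ, mul_add]
    exact Submodule.add_mem _ (step_cb d i (by omega) _ (ih (by omega)))
      (step_Tcb d i (by omega) _ (ih (by omega)))

theorem hh_mem (d k : ℕ) (hk : k ≤ 2 * d + 1) :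
    hh d k ∈ Submodule.span (ZMod 2) (mono '' gset d (d + 1)) := by
  have hsub : gset d (k / 2 + 1) ⊆ gset d (d + 1) := by
    rintro _ ⟨B', C', rfl, h1, h2, h3, h4, h5⟩
    exact ⟨B', C', rfl, h1, by omega, by omega, fun w _ => w.1.2, fun w _ => w.1.2⟩
  refine Submodule.span_mono (Set.image_mono hsub) ?_
  rw [hh]
  have := ZZ_mem d (k / 2) (by omega)
  split_ifs
  · exact step_ca d _ (by omega) _ this
  · exact step_cb d _ (by omega) _ this

/-- good pairs at the level of the second subdivision -/
def gl (d : ℕ) : Set (Finset (Finset (Finset (WW d)) ⊕ Finset (Finset (WW d)))) :=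
  {A | ∃ B C : Finset (Finset (Finset (WW d))), A = B.disjSum C ∧ ∃ σ τ : Finset (WW d), Disjoint σ τ ∧ σ.card ≤ d + 1 ∧
    τ.card ≤ d + 1 ∧ B ∈ sd2set σ ∧ C ∈ sd2set τ}

theorem Th_mem (d : ℕ) (p : P (WW d ⊕ WW d))
    (hp : p ∈ Submodule.span (ZMod 2) (mono '' gset d (d + 1))) :
    Th p ∈ Submodule.span (ZMod 2) (mono '' gl d) := by
  refine maps Th _ _ ?_ p hp
  rintro _ ⟨σ, τ, rfl, h1, h2, h3, -, -⟩
  rw [Th_mono]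
  refine maps (LinearMap.mulRight (ZMod 2) (rename Sum.inr (ee τ)) ∘ₗ (rename Sum.inl).toLinearMap)
    (sd2set σ) _ ?_ _ (ee_mem σ)
  intro B hB
  refine maps (LinearMap.mulLeft (ZMod 2) (rename Sum.inl (mono B)) ∘ₗ (rename Sum.inr).toLinearMap)
    (sd2set τ) _ ?_ _ (ee_mem τ)
  intro C hC
  exact Submodule.subset_span ⟨B.disjSum C, ⟨B, C, rfl, σ, τ, h1, h2, h3, hB, hC⟩,
    mono_disjSum B C⟩

theorem cc_swap {L : Type} (g : L → ℕ → ℝ) (k : ℕ) (B C : Finset L) :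
    cc (sg g) k (C.disjSum B) = cc (fun v j => - sg g v j) k (B.disjSum C) := by
  have hG : ∀ v j, sg g (Sum.swap v) j = - sg g v j := by
    rintro (v | v) j <;> simp [sg, sgn, pr]
  have hsum : ∀ (l : L ⊕ L → ℝ) j, ∑ v ∈ C.disjSum B, l v * sg g v j
      = ∑ v ∈ B.disjSum C, l v.swap * - sg g v j := by
    intro l j
    simp only [Finset.sum_disjSum, ← hG, Sum.swap_inl, Sum.swap_inr]
    rw [add_comm]
  have hsum' : ∀ (l : L ⊕ L → ℝ) j, ∑ v ∈ C.disjSum B, l v.swap * sg g v j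
      = ∑ v ∈ B.disjSum C, l v * - sg g v j := by
    intro l j
    simp only [Finset.sum_disjSum, ← hG, Sum.swap_inl, Sum.swap_inr]
    rw [add_comm]
  have hmem : ∀ v : L ⊕ L, v.swap ∈ C.disjSum B ↔ v ∈ B.disjSum C := by
    rintro (v | v) <;> simp
  have hmem' : ∀ v : L ⊕ L, v.swap ∈ B.disjSum C ↔ v ∈ C.disjSum B := by
    rintro (v | v) <;> simp
  unfold cc
  refine congrArg ind (propext (and_congr ?_ ?_))
  · simp [add_comm]
  · constructor
    · rintro ⟨l, h1, h2, h3⟩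
      refine ⟨fun v => l v.swap, fun v hv => h1 _ ((hmem v).2 hv), fun j hj => ?_, ?_⟩
      · rw [← hsum]; exact h2 j hj
      · rw [← hsum]; exact h3
    · rintro ⟨l, h1, h2, h3⟩
      refine ⟨fun v => l v.swap, fun v hv => h1 _ ((hmem' v).2 hv), fun j hj => ?_, ?_⟩
      · rw [hsum']; exact h2 j hj
      · rw [hsum']; exact h3

theorem core (d : ℕ) (g : Finset (Finset (WW d)) → ℕ → ℝ)
    (hg : ∀ s ∈ gl d, ∃ y : ℕ → ℝ, ∀ v ∈ s, 0 < ∑ j ∈ Finset.range (2 * d + 1), y j * sg g v j) :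
    False := by
  classical
  obtain ⟨g', hgen, hpos⟩ := perturb (2 * d + 1) g (Finset.univ.filter (· ∈ gl d))
    (fun s hs => hg s (Finset.mem_filter.1 hs).2)
  have hpos : ∀ s ∈ gl d, ∃ y : ℕ → ℝ, ∀ v ∈ s, 0 < ∑ j ∈ Finset.range (2 * d + 1), y j * sg g' v j :=
    fun s hs => hpos s (by simpa using hs)
  have hgen : ∀ s ∈ gl d, GenS (sg g') (2 * d + 1) s := by
    rintro _ ⟨B, C, rfl, σ, τ, h1, -, -, hB, hC⟩
    apply hgen
    rintro F ⟨hFB, hFC⟩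
    rw [Finset.inl_mem_disjSum] at hFB
    rw [Finset.inr_mem_disjSum] at hFC
    obtain ⟨⟨ρ, hρ⟩, hF⟩ := hB.1 F hFB
    obtain ⟨⟨w, hw⟩, h2⟩ := hF.1 ρ hρ
    have h3 := ((hC.1 F hFC).2.1 ρ hρ).2
    exact Finset.disjoint_left.1 h1 (h2 hw) (h3 hw)
  have hm : ∀ s ∈ gl d, nn (sg g') (2 * d + 1) s = 0 := by
    intro s hs
    apply ind_neg
    rintro ⟨hc, l, hl, h0⟩
    obtain ⟨y, hy⟩ := hpos s hs
    have hne : s.Nonempty := by rw [← Finset.card_pos]; omega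
    have h1 : 0 < ∑ v ∈ s, l v * ∑ j ∈ Finset.range (2 * d + 1), y j * sg g' v j :=
      Finset.sum_pos (fun v hv => mul_pos (hl v hv) (hy v hv)) hne
    have h2 : ∑ v ∈ s, l v * ∑ j ∈ Finset.range (2 * d + 1), y j * sg g' v j = 0 := by
      simp only [Finset.mul_sum]
      rw [Finset.sum_comm]
      refine Finset.sum_eq_zero (fun j hj => ?_)
      rw [Finset.sum_congr rfl (fun v _ => mul_left_comm _ _ _), ← Finset.mul_sum,
        h0 j (Finset.mem_range.1 hj), mul_zero]
    linarith
  have hN1 : ∀ k < 2 * d + 1, ∀ q ∈ Submodule.span (ZMod 2) (mono '' gl d),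
      ext (nn (sg g') k) q = ext (cc (sg g') k) q + ext (cc (sg g') k) (TT q) := by
    intro k hk q hq
    refine agree (ext (nn (sg g') k)) (ext (cc (sg g') k) + ext (cc (sg g') k) ∘ₗ TT) (gl d) ?_ q hq
    intro A hA
    have h1 := rel1 (sg g') _ k hk A (hgen A hA)
    obtain ⟨B, C, rfl, -⟩ := hA
    rw [LinearMap.add_apply, LinearMap.comp_apply, TT_mono, ext_mono, ext_mono, ext_mono, h1, cc_swap g' k B C]
  have hN2 : ∀ k, k + 1 ≤ 2 * d + 1 → ∀ q ∈ Submodule.span (ZMod 2) (mono '' gl d),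
      ext (nn (sg g') (k + 1)) q = ext (cc (sg g') k) (bd q) := by
    intro k hk q hq
    refine agree (ext (nn (sg g') (k + 1))) (ext (cc (sg g') k) ∘ₗ bd) (gl d) ?_ q hq
    intro A hA
    rw [LinearMap.comp_apply, bd_mono, map_sum, ext_mono, rel2 (sg g') _ k hk A (hgen A hA)]
    exact Finset.sum_congr rfl (fun i _ => (ext_mono _ _).symm)
  have key : ∀ k ≤ 2 * d + 1, ext (nn (sg g') k) (Th (hh d k)) = 1 := by
    intro k
    induction k with
    | zero =>
      intro _
      have h1 : hh d 0 = mono (({(Fin.ofNat (d + 1) 0, 0)} : Finset (WW d)).disjSum ∅) := by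
        rw [mono_disjSum]; simp [hh, ZZ, ca, mono]
      rw [h1, Th_mono, ee_single, ee_empty, map_one, mul_one, rename_X]
      have h2 : ∀ v, (X v : P (Finset (Finset (WW d)) ⊕ Finset (Finset (WW d)))) = mono {v} := by
        intro v; simp [mono]
      rw [h2, ext_mono]
      apply ind_pos
      exact ⟨by simp, fun _ => 1, by simp, by simp⟩
    | succ k ih =>
      intro hk
      have hb := agree (Th ∘ₗ bd) (bd ∘ₗ Th) (gset d (d + 1)) (by
        rintro _ ⟨B, C, rfl, -⟩
        exact Th_bd B C) _ (hh_mem d (k + 1) hk)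
      have hT := agree (Th ∘ₗ TT) (TT ∘ₗ Th) (gset d (d + 1)) (by
        rintro _ ⟨B, C, rfl, -⟩
        exact Th_TT B C) _ (hh_mem d k (by omega))
      simp only [LinearMap.comp_apply] at hb hT
      rw [hN2 k hk _ (Th_mem d _ (hh_mem d _ hk)), ← hb, bd_hh, map_add, map_add, hT,
        ← hN1 k (by omega) _ (Th_mem d _ (hh_mem d _ (by omega)))]
      exact ih (by omega)
  have h1 := key (2 * d + 1) le_rfl
  have h2 := agree (ext (nn (sg g') (2 * d + 1))) 0 (gl d) (by
    intro A hA
    rw [ext_mono, hm A hA]; rfl) _ (Th_mem d _ (hh_mem d (2 * d + 1) le_rfl))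
  rw [h2] at h1
  exact zero_ne_one h1

end Tz

open Tz in
theorem tancer_tightness (d : ℕ) (hd : 1 ≤ d) :
    ∃ (V : Type) (_ : Fintype V) (_ : DecidableEq V) (Δ : Finset (Finset V)),
      (∀ σ ∈ Δ, ∀ τ ⊆ σ, τ ∈ Δ) ∧
      (∀ σ ∈ Δ, σ.card ≤ d + 1) ∧
      (∃ σ ∈ Δ, σ.card = d + 1) ∧
      ¬ ∃ U : V → Set (Fin (2 * d) → ℝ),
          (∀ v, Convex ℝ (U v)) ∧
          ∀ σ : Finset V, σ.Nonempty →
            (σ ∈ Δ ↔ (⋂ v ∈ σ, U v).Nonempty) := by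
  classical
  let K : Finset (Finset (WW d)) → Prop := fun F =>
    (∀ ρ ∈ F, ρ.Nonempty ∧ ρ.card ≤ d + 1) ∧ ∀ ρ ∈ F, ∀ ρ' ∈ F, ρ ⊆ ρ' ∨ ρ' ⊆ ρ
  refine ⟨Finset (WW d), inferInstance, inferInstance, Finset.univ.filter K, ?_, ?_, ?_, ?_⟩
  · intro σ hσ τ hτ
    rw [Finset.mem_filter] at hσ ⊢
    exact ⟨Finset.mem_univ _, fun ρ hρ => hσ.2.1 ρ (hτ hρ),
      fun ρ hρ ρ' hρ' => hσ.2.2 ρ (hτ hρ) ρ' (hτ hρ')⟩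
  · intro F hF
    rw [Finset.mem_filter] at hF
    obtain ⟨-, h1, h2⟩ := hF
    have hc : F.card ≤ (Finset.Icc 1 (d + 1)).card := by
      refine Finset.card_le_card_of_injOn Finset.card ?_ ?_
      · intro ρ hρ
        have := h1 ρ hρ
        simp only [Finset.coe_Icc, Set.mem_Icc]
        exact ⟨Finset.card_pos.2 this.1, this.2⟩
      · intro ρ hρ ρ' hρ' h
        rcases h2 ρ hρ ρ' hρ' with h' | h'
        · exact Finset.eq_of_subset_of_card_le h' (le_of_eq h.symm)
        · exact (Finset.eq_of_subset_of_card_le h' (le_of_eq h)).symm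
    simpa using hc
  · let f : Fin (d + 1) → Finset (WW d) := fun i => (Finset.Iic i).image (fun j => (j, 0))
    have hcard : ∀ i, (f i).card = i + 1 := by
      intro i
      rw [Finset.card_image_of_injective _ (fun a b h => by simpa using h)]
      simp
    have hmono : Monotone f := fun i j hij => Finset.image_subset_image (Finset.Iic_subset_Iic.2 hij)
    refine ⟨Finset.univ.image f, ?_, ?_⟩
    · rw [Finset.mem_filter]
      refine ⟨Finset.mem_univ _, ?_, ?_⟩
      · intro ρ hρ
        obtain ⟨i, -, rfl⟩ := Finset.mem_image.1 hρ
        rw [← Finset.card_pos, hcard]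
        omega
      · intro ρ hρ ρ' hρ'
        obtain ⟨i, -, rfl⟩ := Finset.mem_image.1 hρ
        obtain ⟨j, -, rfl⟩ := Finset.mem_image.1 hρ'
        rcases le_total i j with h | h
        · exact Or.inl (hmono h)
        · exact Or.inr (hmono h)
    · rw [Finset.card_image_of_injective]
      · simp
      · intro i j h
        have := congrArg Finset.card h
        rw [hcard, hcard] at this
        exact Fin.ext (by omega)
  · rintro ⟨U, hconv, hU⟩
    have hpt : ∀ F : Finset (Finset (WW d)), ∃ x : Fin (2 * d) → ℝ, F.Nonempty → K F →
        ∀ ρ ∈ F, x ∈ U ρ := by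
      intro F
      by_cases h : F.Nonempty ∧ K F
      · obtain ⟨x, hx⟩ := (hU F h.1).1 (Finset.mem_filter.2 ⟨Finset.mem_univ _, h.2⟩)
        refine ⟨x, fun _ _ ρ hρ => ?_⟩
        simp only [Set.mem_iInter] at hx
        exact hx ρ hρ
      · exact ⟨0, fun h1 h2 => (h ⟨h1, h2⟩).elim⟩
    choose x hx using hpt
    have hdisj : ∀ ρ ρ' : Finset (WW d), ρ.Nonempty → ρ'.Nonempty → Disjoint ρ ρ' →
        Disjoint (U ρ) (U ρ') := by
      intro ρ ρ' h1 h2 h3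
      rw [Set.disjoint_left]
      intro z hz hz'
      have := (hU {ρ, ρ'} (by simp)).2 ⟨z, by simp [hz, hz']⟩
      rw [Finset.mem_filter] at this
      rcases this.2.2 ρ (by simp) ρ' (by simp) with h | h
      · obtain ⟨w, hw⟩ := h1
        exact Finset.disjoint_left.1 h3 hw (h hw)
      · obtain ⟨w, hw⟩ := h2
        exact Finset.disjoint_left.1 h3 (h hw) hw
    -- every good family of points lies in one convex set
    have hone : ∀ σ : Finset (WW d), σ.card ≤ d + 1 → ∀ B ∈ sd2set σ, B.Nonempty →
        ∃ ρ : Finset (WW d), ρ.Nonempty ∧ ρ ⊆ σ ∧ ∀ F ∈ B, x F ∈ U ρ := by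
      intro σ hσ B hB hne
      obtain ⟨F0, hF0, hmin⟩ := Finset.exists_min_image B Finset.card hne
      obtain ⟨ρ, hρ⟩ := (hB.1 F0 hF0).1
      have h1 := (hB.1 F0 hF0).2.1 ρ hρ
      refine ⟨ρ, h1.1, h1.2, fun F hF => ?_⟩
      have hsub : F0 ⊆ F := by
        rcases hB.2 F0 hF0 F hF with h | h
        · exact h
        · exact (Finset.eq_of_subset_of_card_le h (hmin F hF)).symm ▸ subset_rfl
      obtain ⟨h2, h3⟩ := hB.1 F hF
      exact hx F h2 ⟨fun ρ hρ => ⟨(h3.1 ρ hρ).1,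
        (Finset.card_le_card (h3.1 ρ hρ).2).trans hσ⟩, h3.2⟩ ρ (hsub hρ)
    let g : Finset (Finset (WW d)) → ℕ → ℝ := fun F j =>
      if j = 0 then 1 else if h : j - 1 < 2 * d then x F ⟨j - 1, h⟩ else 0
    have hgsum : ∀ (F : Finset (Finset (WW d))) (y : ℕ → ℝ),
        ∑ j ∈ Finset.range (2 * d + 1), y j * g F j
          = y 0 + ∑ i : Fin (2 * d), y (i + 1) * x F i := by
      intro F y
      rw [Finset.sum_range_succ', add_comm, Finset.sum_range]
      simp [g]
    -- a suitable affine functional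
    have hsep : ∀ s ∈ gl d, ∃ (f : (Fin (2 * d) → ℝ) →ₗ[ℝ] ℝ) (c : ℝ),
        (∀ F, Sum.inl F ∈ s → 0 < c + f (x F)) ∧ (∀ F, Sum.inr F ∈ s → c + f (x F) < 0) := by
      rintro _ ⟨B, C, rfl, σ, τ, hστ, hσ, hτ, hB, hC⟩
      simp only [Finset.inl_mem_disjSum, Finset.inr_mem_disjSum]
      rcases B.eq_empty_or_nonempty with rfl | hBne
      · exact ⟨0, -1, by simp, by simp⟩
      rcases C.eq_empty_or_nonempty with rfl | hCne
      · exact ⟨0, 1, by simp, by simp⟩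
      obtain ⟨ρ, h1, h2, h3⟩ := hone σ hσ B hB hBne
      obtain ⟨ρ', h1', h2', h3'⟩ := hone τ hτ C hC hCne
      have hd' : Disjoint (convexHull ℝ (x '' (B : Set _))) (convexHull ℝ (x '' (C : Set _))) := by
        refine (hdisj ρ ρ' h1 h1' (hστ.mono h2 h2')).mono ?_ ?_
        · refine convexHull_min ?_ (hconv _)
          rintro _ ⟨F, hF, rfl⟩; exact h3 F hF
        · refine convexHull_min ?_ (hconv _)
          rintro _ ⟨F, hF, rfl⟩; exact h3' F hF
      obtain ⟨f, u, v, hf1, huv, hf2⟩ := geometric_hahn_banach_compact_closed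
        (convex_convexHull ℝ _) ((B.finite_toSet.image x).isCompact_convexHull ℝ)
        (convex_convexHull ℝ _) ((C.finite_toSet.image x).isClosed_convexHull ℝ) hd'
      refine ⟨-(f : (Fin (2 * d) → ℝ) →ₗ[ℝ] ℝ), u, fun F hF => ?_, fun F hF => ?_⟩
      · have := hf1 (x F) (subset_convexHull ℝ _ ⟨F, hF, rfl⟩)
        simp; linarith
      · have := hf2 (x F) (subset_convexHull ℝ _ ⟨F, hF, rfl⟩)
        simp; linarith
    refine core d g (fun s hs => ?_)
    obtain ⟨f, c, h1, h2⟩ := hsep s hs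
    let y : ℕ → ℝ := fun j => if j = 0 then c else
      if h : j - 1 < 2 * d then f (fun i => if ⟨j - 1, h⟩ = i then 1 else 0) else 0
    have hy : ∀ F, ∑ j ∈ Finset.range (2 * d + 1), y j * g F j = c + f (x F) := by
      intro F
      rw [hgsum]
      congr 1
      rw [LinearMap.pi_apply_eq_sum_univ f (x F)]
      refine Finset.sum_congr rfl (fun i _ => ?_)
      simp [y, mul_comm]
      intro h
      have := i.2
      omega
    refine ⟨y, ?_⟩
    rintro (F | F) hF
    · simp only [sg, sgn, pr, Sum.elim_inl, id, one_mul]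
      rw [hy]; exact h1 F hF
    · simp only [sg, sgn, pr, Sum.elim_inr, id, neg_mul, one_mul, mul_neg, Finset.sum_neg_distrib]
      rw [hy]; linarith [h2 F hF]
end
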